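/- Corollary (logarithmic trace bound). Let m ≥ 1 be an integer and ν > 2, M > 0, L > 0, λ > 0 and Δ ≥ 0 be reals, and set α = √(νλ)/L. Then ((ν+m)/2)·log( 1 + m·M·Δ/(ν−2) + m·L²·Δ²/(νλ) ) ≤ ((ν+m)·√m/2)·( M·α/(2(ν−2)) + Δ/α ). -/

import Mathlib

/-!
Put `s = √m`, `X = sΔ/α` and `a = sMα/(2(ν−2))`. Since `α² = νλ/L²`, the argument of the logarithm
is `1 + 2aX + X²`, which is at most `1 + (a + X)²`. The bound is then
`1 + u² ≤ exp u` at `u = a + X ≥ 0` (`one_add_sq_le_exp`), multiplied by `(ν + m)/2`.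
-/

open Real

/-- Follows from the cubic Taylor lower bound for `exp`, as `1 - u/2 + u²/6 > 0`. -/
lemma one_add_sq_le_exp {u : ℝ} (hu : 0 ≤ u) : 1 + u ^ 2 ≤ Real.exp u := by
  have h := Real.sum_le_exp_of_nonneg hu 4
  simp only [Finset.sum_range_succ, Finset.sum_range_zero, Nat.factorial] at h
  norm_num at h
  nlinarith [mul_nonneg hu (sq_nonneg (u - 3 / 2))]

/-- Corollary (logarithmic trace bound): with `α = √(νλ)/L`,
`((ν+m)/2)·log(1 + mMΔ/(ν−2) + mL²Δ²/(νλ)) ≤ ((ν+m)√m/2)·(Mα/(2(ν−2)) + Δ/α)`. -/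
theorem log_trace_bound
    (m : ℕ) (hm : 1 ≤ m) (ν M L lam Δ : ℝ)
    (hν : 2 < ν) (hM : 0 < M) (hL : 0 < L) (hlam : 0 < lam) (hΔ : 0 ≤ Δ)
    (α : ℝ) (hα : α = Real.sqrt (ν * lam) / L) :
    ((ν + m) / 2) * Real.log (1 + m * M * Δ / (ν - 2) + m * L ^ 2 * Δ ^ 2 / (ν * lam))
      ≤ ((ν + m) * Real.sqrt m / 2) * (M * α / (2 * (ν - 2)) + Δ / α) := by
  have hα0 : 0 < α := by rw [hα]; positivity
  have hν2 : 0 < ν - 2 := by linarith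
  have hs2 : Real.sqrt m ^ 2 = m := Real.sq_sqrt (Nat.cast_nonneg m)
  have hνl : ν * lam = α ^ 2 * L ^ 2 := by
    rw [hα, div_pow, Real.sq_sqrt (by positivity)]
    field_simp
  set s := Real.sqrt m
  have hs : 0 ≤ s := Real.sqrt_nonneg _
  have hX : 0 ≤ s * (Δ / α) := by positivity
  have ha : 0 ≤ s * (M * α / (2 * (ν - 2))) := by positivity
  set u := s * (M * α / (2 * (ν - 2)) + Δ / α) with hu
  have hu0 : 0 ≤ u := by rw [hu, mul_add]; exact add_nonneg ha hX
  have harg : 1 + m * M * Δ / (ν - 2) + m * L ^ 2 * Δ ^ 2 / (ν * lam)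
      = 1 + u ^ 2 - (s * (M * α / (2 * (ν - 2)))) ^ 2 := by
    rw [hνl, ← hs2, hu]
    field_simp
    ring
  have hpos : 0 < 1 + m * M * Δ / (ν - 2) + m * L ^ 2 * Δ ^ 2 / (ν * lam) := by positivity
  have hlog : Real.log (1 + m * M * Δ / (ν - 2) + m * L ^ 2 * Δ ^ 2 / (ν * lam)) ≤ u := by
    rw [Real.log_le_iff_le_exp hpos, harg]
    linarith [one_add_sq_le_exp hu0, sq_nonneg (s * (M * α / (2 * (ν - 2))))]
  calc _ ≤ ((ν + m) / 2) * u := mul_le_mul_of_nonneg_left hlog (by positivity)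
    _ = _ := by rw [hu]; ring
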